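/- Let p, q ≥ 1, let A_1,…,A_p, B_1,…,B_q be strictly positive and a_1,…,a_p, b_1,…,b_q be strictly positive reals, set W(x) = ∏_{i=1}^p Γ(A_i x + a_i) / ∏_{j=1}^q Γ(B_j x + b_j), and P(u) = Σ_{i=1}^p e^{−a_i u/A_i}/(1 − e^{−u/A_i}) − Σ_{j=1}^q e^{−b_j u/B_j}/(1 − e^{−u/B_j}) for u > 0. Then the function x ↦ (log W)′(x) = Σ_{i=1}^p A_i ψ(A_i x + a_i) − Σ_{j=1}^q B_j ψ(B_j x + b_j) is a Bernstein function on (0,∞) if and only if P(u) ≥ 0 for all u > 0 and Σ_{i=1}^p A_i ψ(a_i) − Σ_{j=1}^q B_j ψ(b_j) ≥ 0. -/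

import Mathlib

open MeasureTheory

/-- A function `f` is completely monotonic on `(0,∞)` if it is infinitely
differentiable there and `(-1)^n f^(n)(x) ≥ 0` for all `n ≥ 0` and `x > 0`. -/
def CompletelyMonotonicOn (f : ℝ → ℝ) : Prop :=
  (∀ x > (0 : ℝ), ContDiffAt ℝ (⊤ : ℕ∞) f x) ∧
    ∀ (n : ℕ), ∀ x > (0 : ℝ), 0 ≤ (-1 : ℝ) ^ n * iteratedDeriv n f x

/-- A function `f` is a Bernstein function on `(0,∞)` if `f ≥ 0` there and
`f'` is completely monotonic on `(0,∞)`. -/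
def BernsteinOn (f : ℝ → ℝ) : Prop :=
  (∀ x > (0 : ℝ), 0 ≤ f x) ∧ CompletelyMonotonicOn (deriv f)
section LapSec
open Set Filter Topology

/-- Laplace-type transform with monomial weight. -/
noncomputable def lapT (g : ℝ → ℝ) (n : ℕ) (x : ℝ) : ℝ :=
  ∫ s in Ioi (0:ℝ), s ^ n * g s * Real.exp (-(x * s))

/-- admissible densities -/
def Adm (g : ℝ → ℝ) : Prop :=
  ContinuousOn g (Ioi 0) ∧ ∃ C : ℝ, 0 ≤ C ∧ ∀ s > (0:ℝ), |g s| ≤ C * (1 + s)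

theorem pow_exp_int (n : ℕ) {x : ℝ} (hx : 0 < x) :
    IntegrableOn (fun s : ℝ => s ^ n * Real.exp (-(x * s))) (Ioi 0) := by
  have h := integrableOn_rpow_mul_exp_neg_mul_rpow (p := 1) (s := n) (b := x)
    (by have := n.cast_nonneg (α := ℝ); linarith) one_pos hx
  refine h.congr_fun (fun s hs => ?_) measurableSet_Ioi
  simp [Real.rpow_natCast]

theorem bound_int (C : ℝ) (n : ℕ) {x : ℝ} (hx : 0 < x) :
    IntegrableOn (fun s : ℝ => s ^ n * (C * (1 + s)) * Real.exp (-(x * s))) (Ioi 0) := by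
  have h : IntegrableOn (fun s : ℝ => C * (s ^ n * Real.exp (-(x * s))) +
      C * (s ^ (n+1) * Real.exp (-(x * s)))) (Ioi 0) :=
    ((pow_exp_int n hx).const_mul C).add ((pow_exp_int (n+1) hx).const_mul C)
  refine h.congr_fun (fun s hs => ?_) measurableSet_Ioi
  simp only
  ring

theorem Adm.meas {g : ℝ → ℝ} (hg : Adm g) (n : ℕ) (x : ℝ) :
    AEStronglyMeasurable (fun s : ℝ => s ^ n * g s * Real.exp (-(x * s)))
      (volume.restrict (Ioi 0)) := by
  apply ContinuousOn.aestronglyMeasurable _ measurableSet_Ioi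
  have := hg.1
  fun_prop

theorem Adm.integ {g : ℝ → ℝ} (hg : Adm g) (n : ℕ) {x : ℝ} (hx : 0 < x) :
    IntegrableOn (fun s : ℝ => s ^ n * g s * Real.exp (-(x * s))) (Ioi 0) := by
  obtain ⟨C, hC, hb⟩ := hg.2
  refine (bound_int C n hx).mono' (hg.meas n x) ?_
  refine (ae_restrict_mem measurableSet_Ioi).mono fun s hs => ?_
  have hs' : 0 < s := hs
  rw [norm_mul, norm_mul, Real.norm_eq_abs, Real.norm_eq_abs, Real.norm_eq_abs, Real.abs_exp,
    abs_of_pos (pow_pos hs' n)]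
  gcongr
  exact hb s hs

theorem Adm.hasDerivAt {g : ℝ → ℝ} (hg : Adm g) (n : ℕ) {x : ℝ} (hx : 0 < x) :
    HasDerivAt (lapT g n) (-lapT g (n+1) x) x := by
  obtain ⟨C, hC, hb⟩ := hg.2
  have h := hasDerivAt_integral_of_dominated_loc_of_deriv_le (𝕜 := ℝ)
    (μ := volume.restrict (Ioi (0:ℝ)))
    (F := fun x s => s ^ n * g s * Real.exp (-(x * s)))
    (F' := fun x s => -(s ^ (n+1) * g s * Real.exp (-(x * s))))
    (x₀ := x) (s := Ioi (x/2))
    (bound := fun s : ℝ => s ^ (n+1) * (C * (1 + s)) * Real.exp (-(x/2 * s)))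
    (Ioi_mem_nhds (by linarith))
    (Eventually.of_forall fun y => hg.meas n y)
    (hg.integ n hx) (hg.meas (n+1) x).neg ?_ (bound_int C (n+1) (by linarith)) ?_
  · have h2 := h.2
    rw [integral_neg] at h2
    exact h2
  · refine (ae_restrict_mem measurableSet_Ioi).mono fun s hs y hy => ?_
    have hs' : 0 < s := hs
    have hy' : x/2 < y := hy
    rw [norm_neg, norm_mul, norm_mul, Real.norm_eq_abs, Real.norm_eq_abs, Real.norm_eq_abs,
      Real.abs_exp, abs_of_pos (pow_pos hs' (n+1))]
    gcongr
    exact hb s hs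
  · refine (ae_restrict_mem measurableSet_Ioi).mono fun s hs y hy => ?_
    have h1 : HasDerivAt (fun y : ℝ => -(y * s)) (-(1 * s)) y :=
      ((hasDerivAt_id y).mul_const s).neg
    have h2 := (h1.exp).const_mul (s ^ n * g s)
    refine h2.congr_deriv ?_
    ring

theorem Adm.contDiffOn {g : ℝ → ℝ} (hg : Adm g) (m : ℕ) : ∀ n : ℕ,
    ContDiffOn ℝ m (lapT g n) (Ioi 0) := by
  induction m with
  | zero =>
    intro n
    rw [Nat.cast_zero, contDiffOn_zero]
    exact fun x hx => (hg.hasDerivAt n hx).continuousAt.continuousWithinAt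
  | succ m ih =>
    intro n
    rw [Nat.cast_succ, contDiffOn_succ_iff_deriv_of_isOpen isOpen_Ioi]
    refine ⟨fun x hx => (hg.hasDerivAt n hx).differentiableAt.differentiableWithinAt, by simp, ?_⟩
    exact (ih (n+1)).neg.congr fun x hx => (hg.hasDerivAt n hx).deriv

theorem Adm.contDiffAt {g : ℝ → ℝ} (hg : Adm g) {F : ℝ → ℝ}
    (hF : ∀ x > 0, F x = lapT g 0 x) {x : ℝ} (hx : 0 < x) :
    ContDiffAt ℝ (⊤ : ℕ∞) F x := by
  have h : ContDiffOn ℝ (⊤ : ℕ∞) (lapT g 0) (Ioi 0) :=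
    contDiffOn_infty.2 fun m => hg.contDiffOn m 0
  exact (h.congr fun y hy => hF y hy).contDiffAt (Ioi_mem_nhds hx)

theorem Adm.iter {g : ℝ → ℝ} (hg : Adm g) {F : ℝ → ℝ}
    (hF : ∀ x > 0, F x = lapT g 0 x) (n : ℕ) : ∀ x > 0,
    iteratedDeriv n F x = (-1) ^ n * lapT g n x := by
  induction n with
  | zero => intro x hx; simp [hF x hx]
  | succ n ih =>
    intro x hx
    rw [iteratedDeriv_succ]
    have he : iteratedDeriv n F =ᶠ[𝓝 x] fun y => (-1) ^ n * lapT g n y := by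
      filter_upwards [Ioi_mem_nhds hx] with y hy using ih y hy
    rw [he.deriv_eq, ((hg.hasDerivAt n hx).const_mul _).deriv]
    ring

theorem Adm.cm_iff {g : ℝ → ℝ} (hg : Adm g) {F : ℝ → ℝ}
    (hF : ∀ x > 0, F x = lapT g 0 x) :
    CompletelyMonotonicOn F ↔ ∀ n : ℕ, ∀ x > 0, 0 ≤ lapT g n x := by
  have key : ∀ n : ℕ, ∀ x > 0, (-1 : ℝ) ^ n * iteratedDeriv n F x = lapT g n x := by
    intro n x hx
    rw [hg.iter hF n x hx, ← mul_assoc, ← mul_pow]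
    simp
  constructor
  · intro h n x hx
    rw [← key n x hx]
    exact h.2 n x hx
  · intro h
    refine ⟨fun x hx => hg.contDiffAt hF hx, fun n x hx => ?_⟩
    rw [key n x hx]
    exact h n x hx

theorem Adm.nonneg_of {g : ℝ → ℝ} (hg : Adm g) (h : ∀ n : ℕ, ∀ x > 0, 0 ≤ lapT g n x) :
    ∀ u > 0, 0 ≤ g u := by
  obtain ⟨C, hC, hb⟩ := hg.2
  intro u hu
  by_contra! hneg
  set φ : ℝ → ℝ := fun s => s * Real.exp (-(s / u)) with hφ
  have hφd : ∀ s, HasDerivAt φ ((1 - s / u) * Real.exp (-(s/u))) s := by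
    intro s
    have h1 : HasDerivAt (fun s : ℝ => -(s / u)) (-(1 / u)) s := ((hasDerivAt_id s).div_const u).neg
    have h2 := (hasDerivAt_id s).mul h1.exp
    refine h2.congr_deriv ?_
    simp only [id]
    ring
  have hφc : Continuous φ := by fun_prop
  have hmono : StrictMonoOn φ (Iic u) := by
    apply strictMonoOn_of_deriv_pos (convex_Iic u) hφc.continuousOn
    intro s hs
    rw [interior_Iic] at hs
    rw [(hφd s).deriv]
    have : s / u < 1 := (div_lt_one hu).2 hs
    exact mul_pos (by linarith) (Real.exp_pos _)
  have hanti : StrictAntiOn φ (Ici u) := by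
    apply strictAntiOn_of_deriv_neg (convex_Ici u) hφc.continuousOn
    intro s hs
    rw [interior_Ici] at hs
    rw [(hφd s).deriv]
    have : 1 < s / u := (one_lt_div hu).2 hs
    exact mul_neg_of_neg_of_pos (by linarith) (Real.exp_pos _)
  -- neighbourhood where g is negative
  have hgc : ContinuousAt g u := hg.1.continuousAt (Ioi_mem_nhds hu)
  set c := -g u / 2 with hc
  have hcpos : 0 < c := by rw [hc]; linarith
  have hev : ∀ᶠ s in 𝓝 u, g s < -c := hgc.eventually (Iio_mem_nhds (by rw [hc]; linarith))
  obtain ⟨δ0, hδ0, hball⟩ := Metric.eventually_nhds_iff.1 hev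
  set δ := min (δ0/2) (u/2) with hδ
  have hδpos : 0 < δ := by positivity
  have hδ1 : δ < δ0 := (min_le_left _ _).trans_lt (by linarith)
  have hδ2 : δ < u := (min_le_right _ _).trans_lt (by linarith)
  have hin : ∀ s, |s - u| ≤ δ → g s < -c := by
    intro s hs
    apply hball
    rw [Real.dist_eq]
    linarith
  set r := max (φ (u - δ)) (φ (u + δ)) with hr
  have hrpos : 0 < r := lt_max_of_lt_left (mul_pos (by linarith) (Real.exp_pos _))
  have hru : r < φ u := max_lt (hmono (by simp [hδpos.le]) (by simp) (by linarith))
    (hanti (by simp) (by simp [hδpos.le]) (by linarith))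
  have hout : ∀ s, δ < |s - u| → φ s ≤ r := by
    intro s hs
    rcases lt_abs.1 hs with h1 | h1
    · exact (hanti.antitoneOn (by simp [hδpos.le]) (by simp; linarith) (by linarith)).trans
        (le_max_right _ _)
    · exact (hmono.monotoneOn (by simp; linarith) (by simp [hδpos.le]) (by linarith)).trans
        (le_max_left _ _)
  obtain ⟨r', hr1, hr2⟩ := exists_between hru
  have hev2 : ∀ᶠ s in 𝓝 u, r' < φ s := hφc.continuousAt.eventually (Ioi_mem_nhds hr2)
  obtain ⟨δ3, hδ3, hball3⟩ := Metric.eventually_nhds_iff.1 hev2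
  set η := min (δ3/2) δ with hη
  have hηpos : 0 < η := by positivity
  have hη1 : η < δ3 := (min_le_left _ _).trans_lt (by linarith)
  have hη2 : η ≤ δ := min_le_right _ _
  have hin2 : ∀ s ∈ Icc (u - η) (u + η), r' < φ s := by
    intro s hs
    apply hball3
    rw [Real.dist_eq]
    have : |s - u| ≤ η := abs_le.2 ⟨by linarith [hs.1], by linarith [hs.2]⟩
    linarith
  -- the constants
  set M := ∫ s in Ioi (0:ℝ), s ^ 0 * (C * (1 + s)) * Real.exp (-(1 * s)) with hM
  set m := ∫ s in Icc (u - η) (u + η), Real.exp (-s) with hm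
  have hmpos : 0 < m := by
    rw [hm, integral_Icc_eq_integral_Ioc, ← intervalIntegral.integral_of_le (by linarith)]
    apply intervalIntegral.intervalIntegral_pos_of_pos_on
    · exact (by fun_prop : Continuous fun s : ℝ => Real.exp (-s)).intervalIntegrable _ _
    · intro s _; exact Real.exp_pos _
    · linarith
  have hexpi : IntegrableOn (fun s : ℝ => Real.exp (-s)) (Icc (u - η) (u + η)) :=
    (by fun_prop : Continuous fun s : ℝ => Real.exp (-s)).continuousOn.integrableOn_Icc
  have hsub : Icc (u - η) (u + η) ⊆ Ioi 0 := fun s hs => by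
    have := hs.1
    show 0 < s
    linarith
  have main : ∀ n : ℕ, lapT g n (n / u + 1) ≤ r ^ n * M - c * r' ^ n * m := by
    intro n
    have hx : 0 < (n:ℝ) / u + 1 := by positivity
    have hi1 := (bound_int C 0 one_pos).const_mul (r ^ n)
    have hi2 : IntegrableOn (Set.indicator (Icc (u - η) (u + η))
      (fun s : ℝ => c * r' ^ n * Real.exp (-s))) (Ioi 0) :=
      ((integrable_indicator_iff measurableSet_Icc).2 (hexpi.const_mul _)).integrableOn
    have e2 : ∫ s in Ioi (0:ℝ), Set.indicator (Icc (u - η) (u + η))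
      (fun s : ℝ => c * r' ^ n * Real.exp (-s)) s = c * r' ^ n * m := by
      rw [setIntegral_indicator measurableSet_Icc, inter_eq_right.2 hsub, integral_const_mul]
    rw [← e2, hM, ← integral_const_mul, ← integral_sub hi1 hi2]
    apply setIntegral_mono_on (hg.integ n hx) (hi1.sub hi2) measurableSet_Ioi
    intro s hs
    have hs' : 0 < s := hs
    have hφs : 0 < φ s := mul_pos hs' (Real.exp_pos _)
    have e3 : s ^ n * g s * Real.exp (-((n / u + 1) * s)) = φ s ^ n * g s * Real.exp (-s) := by
      rw [hφ]
      simp only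
      rw [mul_pow, ← Real.exp_nat_mul,
        show -((n / u + 1) * s) = n * (-(s/u)) + (-s) by field_simp; ring, Real.exp_add]
      ring
    rw [e3, Pi.sub_apply]
    have hE := Real.exp_pos (-s)
    have hpos : 0 ≤ r ^ n * (s ^ 0 * (C * (1 + s)) * Real.exp (-(1 * s))) := by positivity
    by_cases hsI : s ∈ Icc (u - η) (u + η)
    · rw [indicator_of_mem hsI]
      have h1 : g s < -c := hin s ((abs_le.2 ⟨by linarith [hsI.1], by linarith [hsI.2]⟩))
      have h2 : r' ^ n ≤ φ s ^ n := pow_le_pow_left₀ (by linarith) (hin2 s hsI).le n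
      have h3 : φ s ^ n * g s ≤ -(c * r' ^ n) := by
        have h4 : 0 < φ s ^ n := pow_pos hφs n
        nlinarith
      nlinarith
    · rw [indicator_of_notMem hsI, sub_zero]
      by_cases hsd : |s - u| ≤ δ
      · have h1 : g s < -c := hin s hsd
        refine le_trans ?_ hpos
        exact mul_nonpos_of_nonpos_of_nonneg
          (mul_nonpos_of_nonneg_of_nonpos (by positivity) (by linarith)) hE.le
      · push Not at hsd
        have h2 : φ s ^ n ≤ r ^ n := pow_le_pow_left₀ hφs.le (hout s hsd) n
        have h3 : g s ≤ C * (1 + s) := (le_abs_self _).trans (hb s hs)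
        rw [pow_zero, one_mul, one_mul, ← mul_assoc]
        calc φ s ^ n * g s * Real.exp (-s) ≤ φ s ^ n * (C * (1 + s)) * Real.exp (-s) := by gcongr
          _ ≤ r ^ n * (C * (1 + s)) * Real.exp (-s) := by gcongr
  have hr'pos : 0 < r' := hrpos.trans hr1
  have hlim : Tendsto (fun n : ℕ => (r / r') ^ n * M) atTop (𝓝 (0 * M)) :=
    (tendsto_pow_atTop_nhds_zero_of_lt_one (by positivity) ((div_lt_one hr'pos).2 hr1)).mul_const M
  rw [zero_mul] at hlim
  obtain ⟨n, hn⟩ := (hlim.eventually (Iio_mem_nhds (mul_pos hcpos hmpos))).exists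
  have h1 := h n (n / u + 1) (by positivity)
  have h2 := main n
  have h3 : r ^ n * M < c * r' ^ n * m := by
    have h4 : 0 < r' ^ n := pow_pos hr'pos n
    have h5 : (r / r') ^ n * M < c * m := hn
    rw [div_pow, div_mul_eq_mul_div, div_lt_iff₀ h4] at h5
    linarith
  linarith

/-- the kernel of the trigamma function -/
noncomputable def kf (t : ℝ) : ℝ := t / (1 - Real.exp (-t))

theorem one_sub_exp_pos {t : ℝ} (ht : 0 < t) : 0 < 1 - Real.exp (-t) := by
  have : Real.exp (-t) < 1 := Real.exp_lt_one_iff.2 (by linarith)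
  linarith

theorem kf_nonneg {t : ℝ} (ht : 0 < t) : 0 ≤ kf t :=
  div_nonneg ht.le (one_sub_exp_pos ht).le

theorem kf_le {t : ℝ} (ht : 0 < t) : kf t ≤ 1 + t := by
  rw [kf, div_le_iff₀ (one_sub_exp_pos ht)]
  have h1 : (1 + t) * Real.exp (-t) ≤ 1 := by
    rw [Real.exp_neg, ← div_eq_mul_inv, div_le_one (Real.exp_pos _)]
    linarith [Real.add_one_le_exp t]
  linarith

theorem kf_cont : ContinuousOn kf (Ioi 0) := by
  unfold kf
  apply ContinuousOn.div (by fun_prop) (by fun_prop)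
  intro t ht
  exact (one_sub_exp_pos ht).ne'

theorem kf_adm : Adm kf := by
  refine ⟨kf_cont, 1, zero_le_one, fun s hs => ?_⟩
  rw [abs_of_nonneg (kf_nonneg hs), one_mul]
  exact kf_le hs

/-- integrand of the Gauss formula -/
noncomputable def Hf (y t : ℝ) : ℝ := (Real.exp (-t) - Real.exp (-(y * t))) / (1 - Real.exp (-t))

/-- the Gauss integral -/
noncomputable def hf (y : ℝ) : ℝ := ∫ t in Ioi (0:ℝ), Hf y t

theorem exp_sub_le (a b : ℝ) : Real.exp (-a) - Real.exp (-b) ≤ |b - a| * Real.exp (-(min a b)) := by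
  have h1 : Real.exp (-b) = Real.exp (-a) * Real.exp (-(b - a)) := by
    rw [← Real.exp_add]; congr 1; ring
  have h2 := Real.add_one_le_exp (-(b - a))
  have h3 : Real.exp (-a) ≤ Real.exp (-(min a b)) :=
    Real.exp_le_exp.2 (neg_le_neg (min_le_left a b))
  have h4 := Real.exp_pos (-a)
  calc Real.exp (-a) - Real.exp (-b) ≤ Real.exp (-a) * (b - a) := by rw [h1]; nlinarith
    _ ≤ Real.exp (-a) * |b - a| := by gcongr; exact le_abs_self _
    _ ≤ |b - a| * Real.exp (-(min a b)) := by rw [mul_comm]; gcongr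

theorem exp_sub_abs_le (a b : ℝ) :
    |Real.exp (-a) - Real.exp (-b)| ≤ |b - a| * Real.exp (-(min a b)) := by
  rw [abs_le]
  have h1 := exp_sub_le a b
  have h2 := exp_sub_le b a
  rw [abs_sub_comm, min_comm] at h2
  constructor <;> linarith

theorem Hf_meas (y : ℝ) : AEStronglyMeasurable (Hf y) (volume.restrict (Ioi 0)) := by
  apply ContinuousOn.aestronglyMeasurable _ measurableSet_Ioi
  unfold Hf
  apply ContinuousOn.div (by fun_prop) (by fun_prop)
  intro t ht
  exact (one_sub_exp_pos ht).ne'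

theorem Hf_int {y : ℝ} (hy : 0 < y) : IntegrableOn (Hf y) (Ioi 0) := by
  have hm : 0 < min 1 y := lt_min one_pos hy
  refine ((kf_adm.integ 0 hm).const_mul |y - 1|).mono' (Hf_meas y) ?_
  refine (ae_restrict_mem measurableSet_Ioi).mono fun t ht => ?_
  have ht' : 0 < t := ht
  have hp := one_sub_exp_pos ht'
  have h1 := exp_sub_abs_le t (y * t)
  have h2 : min t (y * t) = min 1 y * t := by
    rw [min_mul_of_nonneg _ _ ht'.le, one_mul]
  have h3 : |y * t - t| = |y - 1| * t := by
    rw [← sub_one_mul, abs_mul, abs_of_pos ht']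
  rw [h2, h3] at h1
  rw [Hf, norm_div, Real.norm_eq_abs, Real.norm_eq_abs, abs_of_pos hp, kf, pow_zero, one_mul,
    div_le_iff₀ hp]
  refine h1.trans (le_of_eq ?_)
  field_simp

theorem hf_deriv {y : ℝ} (hy : 0 < y) : HasDerivAt hf (lapT kf 0 y) y := by
  have h := hasDerivAt_integral_of_dominated_loc_of_deriv_le (𝕜 := ℝ)
    (μ := volume.restrict (Ioi (0:ℝ)))
    (F := Hf)
    (F' := fun x s => s ^ 0 * kf s * Real.exp (-(x * s)))
    (x₀ := y) (s := Ioi (y/2))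
    (bound := fun s : ℝ => s ^ 0 * kf s * Real.exp (-(y/2 * s)))
    (Ioi_mem_nhds (by linarith))
    (Eventually.of_forall fun y => Hf_meas y)
    (Hf_int hy) (kf_adm.meas 0 y) ?_ (kf_adm.integ 0 (by linarith)) ?_
  · exact h.2
  · refine (ae_restrict_mem measurableSet_Ioi).mono fun s hs z hz => ?_
    have hs' : 0 < s := hs
    have hz' : y/2 < z := hz
    have hk := kf_nonneg hs'
    rw [Real.norm_eq_abs, abs_of_nonneg (by positivity)]
    gcongr
  · refine (ae_restrict_mem measurableSet_Ioi).mono fun s hs z hz => ?_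
    have h1 : HasDerivAt (fun y : ℝ => -(y * s)) (-(1 * s)) z :=
      ((hasDerivAt_id z).mul_const s).neg
    have h2 := ((h1.exp).const_sub (Real.exp (-s))).div_const (1 - Real.exp (-s))
    refine h2.congr_deriv ?_
    rw [kf]
    ring

theorem hf_mono {x y : ℝ} (hx : 0 < x) (hxy : x ≤ y) : hf x ≤ hf y := by
  apply setIntegral_mono_on (Hf_int hx) (Hf_int (hx.trans_le hxy)) measurableSet_Ioi
  intro t ht
  have ht' : 0 < t := ht
  have hp := one_sub_exp_pos ht'
  unfold Hf
  gcongr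

theorem hf_step {y : ℝ} (hy : 0 < y) : hf (y + 1) = hf y + 1 / y := by
  have h1 : hf (y+1) - hf y = ∫ t in Ioi (0:ℝ), Real.exp (-y * t) := by
    rw [hf, hf, ← integral_sub (Hf_int (by linarith)) (Hf_int hy)]
    apply setIntegral_congr_fun measurableSet_Ioi
    intro t ht
    have hp := one_sub_exp_pos ht
    simp only [Hf]
    rw [← sub_div, div_eq_iff hp.ne', show -((y+1) * t) = -y * t + -t by ring, Real.exp_add,
      show -(y * t) = -y * t by ring]
    ring
  rw [integral_exp_mul_Ioi (by linarith)] at h1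
  simp at h1
  rw [one_div]
  linarith

theorem logGamma_diff {y : ℝ} (hy : 0 < y) :
    DifferentiableAt ℝ (fun y => Real.log (Real.Gamma y)) y := by
  apply DifferentiableAt.log
  · apply Real.differentiableAt_Gamma
    intro m
    have := m.cast_nonneg (α := ℝ)
    intro h
    linarith
  · exact (Real.Gamma_pos_of_pos hy).ne'

theorem psi_mono {x y : ℝ} (hx : 0 < x) (hxy : x ≤ y) :
    deriv (fun y => Real.log (Real.Gamma y)) x ≤ deriv (fun y => Real.log (Real.Gamma y)) y := by
  have := Real.convexOn_log_Gamma.monotoneOn_deriv (fun z hz => logGamma_diff hz)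
  exact this hx (hx.trans_le hxy) hxy

theorem psi_step {y : ℝ} (hy : 0 < y) :
    deriv (fun y => Real.log (Real.Gamma y)) (y + 1) =
      deriv (fun y => Real.log (Real.Gamma y)) y + 1 / y := by
  have h1 : (fun z => Real.log (Real.Gamma (z + 1))) =ᶠ[𝓝 y]
      fun z => Real.log (Real.Gamma z) + Real.log z := by
    filter_upwards [Ioi_mem_nhds hy] with z hz
    have hz' : 0 < z := hz
    rw [Real.Gamma_add_one hz'.ne', Real.log_mul hz'.ne' (Real.Gamma_pos_of_pos hz').ne', add_comm]
  have h2 := (logGamma_diff hy).hasDerivAt.add (Real.hasDerivAt_log hy.ne')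
  have h3 := h1.deriv_eq
  rw [deriv_comp_add_const (f := fun y => Real.log (Real.Gamma y))] at h3
  rw [h3, one_div]
  exact h2.deriv

theorem const_of_step {u v : ℝ → ℝ}
    (hu : ∀ x y, 0 < x → x ≤ y → u x ≤ u y) (hv : ∀ x y, 0 < x → x ≤ y → v x ≤ v y)
    (hu1 : ∀ x, 0 < x → u (x + 1) = u x + 1 / x) (hv1 : ∀ x, 0 < x → v (x + 1) = v x + 1 / x)
    {x y : ℝ} (hx : 0 < x) (hxy : x ≤ y) (hyx : y ≤ x + 1) : u y - v y = u x - v x := by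
  have per : ∀ n : ℕ, ∀ z > 0, u (z + n) - v (z + n) = u z - v z := by
    intro n
    induction n with
    | zero => intro z hz; simp
    | succ n ih =>
      intro z hz
      have hz' : 0 < z + n := by positivity
      rw [Nat.cast_succ, ← add_assoc, hu1 _ hz', hv1 _ hz', ← ih z hz]
      ring
  have hb : ∀ n : ℕ, |(u y - v y) - (u x - v x)| ≤ 1 / (x + n) := by
    intro n
    have hn : 0 < x + n := by positivity
    rw [← per n y (by linarith), ← per n x hx]
    have a1 := hu (x + n) (y + n) hn (by linarith)
    have a2 := hv (x + n) (y + n) hn (by linarith)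
    have a3 := hu (y + n) (x + n + 1) (by linarith) (by linarith)
    have a4 := hv (y + n) (x + n + 1) (by linarith) (by linarith)
    rw [hu1 _ hn] at a3
    rw [hv1 _ hn] at a4
    rw [abs_le]
    constructor <;> linarith
  have hl : Tendsto (fun n : ℕ => 1 / (x + n)) atTop (𝓝 0) := by
    simp only [one_div]
    exact (tendsto_atTop_add_const_left _ x tendsto_natCast_atTop_atTop).inv_tendsto_atTop
  have := ge_of_tendsto' hl hb
  have h0 := abs_nonpos_iff.1 this
  linarith

theorem psi_deriv {y : ℝ} (hy : 0 < y) :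
    HasDerivAt (deriv (fun y => Real.log (Real.Gamma y))) (lapT kf 0 y) y := by
  set u := deriv (fun y => Real.log (Real.Gamma y)) with hu
  set ε := min (y/2) (1/2) with hε
  have hε0 : 0 < ε := by positivity
  have hε1 : ε ≤ y/2 := min_le_left _ _
  have hε2 : ε ≤ 1/2 := min_le_right _ _
  have he : u =ᶠ[𝓝 y] fun z => hf z + (u (y - ε) - hf (y - ε)) := by
    filter_upwards [Ioo_mem_nhds (show y - ε < y by linarith) (show y < y + ε by linarith)] with z hz
    have := const_of_step (u := u) (v := hf) (fun x y => psi_mono) (fun x y => hf_mono)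
      (fun x => psi_step) (fun x => hf_step) (x := y - ε) (y := z) (by linarith) hz.1.le
      (by linarith [hz.2])
    linarith
  exact ((hf_deriv hy).add_const _).congr_of_eventuallyEq he

/-- the density of one summand -/
noncomputable def gterm (A a u : ℝ) : ℝ := A * kf (u / A) * Real.exp (-(a / A * u))

theorem term_adm {A a : ℝ} (hA : 0 < A) (ha : 0 < a) : Adm (gterm A a) := by
  refine ⟨?_, A + 1, by linarith, fun s hs => ?_⟩
  · unfold gterm
    have : ContinuousOn (fun u => kf (u / A)) (Ioi 0) :=
      kf_cont.comp (by fun_prop) fun u hu => div_pos hu hA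
    fun_prop
  · have h1 := kf_le (div_pos hs hA)
    have h2 := kf_nonneg (div_pos hs hA)
    rw [gterm, abs_of_nonneg (by positivity)]
    have h3 : Real.exp (-(a / A * s)) ≤ 1 := Real.exp_le_one_iff.2 (by
      have : 0 < a / A * s := by positivity
      linarith)
    calc A * kf (s / A) * Real.exp (-(a / A * s)) ≤ A * (1 + s / A) * 1 := by gcongr
      _ = A + s := by field_simp
      _ ≤ (A + 1) * (1 + s) := by nlinarith [mul_pos hA hs]

theorem term_deriv {A a x : ℝ} (hA : 0 < A) (ha : 0 < a) (hx : 0 < x) :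
    HasDerivAt (fun x => A * deriv (fun y => Real.log (Real.Gamma y)) (A * x + a))
      (lapT (gterm A a) 0 x) x := by
  have h1 : HasDerivAt (fun x : ℝ => A * x + a) (A * 1) x :=
    ((hasDerivAt_id x).const_mul A).add_const a
  have h2 := ((psi_deriv (y := A * x + a) (by positivity)).comp x h1).const_mul A
  refine h2.congr_deriv ?_
  have h3 := integral_comp_mul_left_Ioi
    (fun u => u ^ 0 * gterm A a u * Real.exp (-(x * u))) 0 hA
  rw [mul_zero, smul_eq_mul] at h3
  have h4 : lapT (gterm A a) 0 x = A * ∫ t in Ioi (0:ℝ), (A * t) ^ 0 * gterm A a (A * t) *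
      Real.exp (-(x * (A * t))) := by
    rw [h3, lapT]
    field_simp
  rw [h4, mul_one, mul_comm _ A]
  congr 1
  rw [lapT, ← integral_const_mul]
  apply setIntegral_congr_fun measurableSet_Ioi
  intro t ht
  simp only [gterm]
  rw [mul_div_cancel_left₀ _ hA.ne', show -((A * x + a) * t) = -(a / A * (A * t)) + -(x * (A * t)) by
    field_simp; ring, Real.exp_add]
  ring

theorem Adm.sum {ι : Type*} (S : Finset ι) (g : ι → ℝ → ℝ) (h : ∀ i, Adm (g i)) :
    Adm (fun u => ∑ i ∈ S, g i u) := by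
  refine ⟨continuousOn_finsetSum _ fun i _ => (h i).1, ?_⟩
  choose C hC hb using fun i => (h i).2
  refine ⟨∑ i ∈ S, C i, Finset.sum_nonneg fun i _ => hC i, fun s hs => ?_⟩
  rw [Finset.sum_mul]
  exact (Finset.abs_sum_le_sum_abs _ _).trans (Finset.sum_le_sum fun i _ => hb i s hs)

theorem Adm.sub {f g : ℝ → ℝ} (hf : Adm f) (hg : Adm g) : Adm (fun u => f u - g u) := by
  obtain ⟨C, hC, hb⟩ := hf.2
  obtain ⟨D, hD, hb'⟩ := hg.2
  refine ⟨hf.1.sub hg.1, C + D, by positivity, fun s hs => ?_⟩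
  rw [add_mul]
  exact (abs_sub _ _).trans (add_le_add (hb s hs) (hb' s hs))

theorem lapT_sum {ι : Type*} (S : Finset ι) (g : ι → ℝ → ℝ) (h : ∀ i, Adm (g i)) {x : ℝ}
    (hx : 0 < x) : lapT (fun u => ∑ i ∈ S, g i u) 0 x = ∑ i ∈ S, lapT (g i) 0 x := by
  unfold lapT
  rw [← integral_finsetSum _ fun i _ => (h i).integ 0 hx]
  simp only [Finset.mul_sum, Finset.sum_mul]

theorem lapT_sub {f g : ℝ → ℝ} (hf : Adm f) (hg : Adm g) {x : ℝ} (hx : 0 < x) :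
    lapT (fun u => f u - g u) 0 x = lapT f 0 x - lapT g 0 x := by
  unfold lapT
  rw [← integral_sub (hf.integ 0 hx) (hg.integ 0 hx)]
  simp only [mul_sub, sub_mul]

end LapSec

theorem stmt7 (p q : ℕ) (hp : 1 ≤ p) (hq : 1 ≤ q)
    (A : Fin p → ℝ) (B : Fin q → ℝ) (a : Fin p → ℝ) (b : Fin q → ℝ)
    (hA : ∀ i, 0 < A i) (hB : ∀ j, 0 < B j)
    (ha : ∀ i, 0 < a i) (hb : ∀ j, 0 < b j)
    (ψ : ℝ → ℝ) (hψ : ψ = deriv (fun y => Real.log (Real.Gamma y)))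
    (P : ℝ → ℝ)
    (hP : ∀ u, P u = (∑ i, Real.exp (-a i * u / A i) / (1 - Real.exp (-u / A i))) -
      ∑ j, Real.exp (-b j * u / B j) / (1 - Real.exp (-u / B j))) :
    BernsteinOn (fun x => (∑ i, A i * ψ (A i * x + a i)) - ∑ j, B j * ψ (B j * x + b j)) ↔
      ((∀ u > (0 : ℝ), 0 ≤ P u) ∧
        0 ≤ (∑ i, A i * ψ (a i)) - ∑ j, B j * ψ (b j)) := by
  set f : ℝ → ℝ := fun x => (∑ i, A i * ψ (A i * x + a i)) - ∑ j, B j * ψ (B j * x + b j) with hf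
  set g : ℝ → ℝ := fun u => (∑ i, gterm (A i) (a i) u) - ∑ j, gterm (B j) (b j) u with hg
  have hga1 := Adm.sum Finset.univ (fun i => gterm (A i) (a i)) fun i => term_adm (hA i) (ha i)
  have hga2 := Adm.sum Finset.univ (fun i => gterm (B i) (b i)) fun i => term_adm (hB i) (hb i)
  have hga : Adm g := hga1.sub hga2
  have hterm : ∀ A a u : ℝ, 0 < A →
      gterm A a u = u * (Real.exp (-a * u / A) / (1 - Real.exp (-u / A))) := by
    intro A a u hA
    rw [gterm, kf, show -(u / A) = -u / A by ring, show -(a / A * u) = -a * u / A by ring]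
    field_simp
  have hgP : ∀ u, g u = u * P u := by
    intro u
    rw [hg, hP, mul_sub, Finset.mul_sum, Finset.mul_sum]
    simp only [hterm _ _ _ (hA _), hterm _ _ _ (hB _)]
  have hfd : ∀ x > 0, HasDerivAt f (lapT g 0 x) x := by
    intro x hx
    rw [hg, lapT_sub hga1 hga2 hx,
      lapT_sum Finset.univ (fun i => gterm (A i) (a i)) (fun i => term_adm (hA i) (ha i)) hx,
      lapT_sum Finset.univ (fun i => gterm (B i) (b i)) (fun i => term_adm (hB i) (hb i)) hx,
      hf, hψ]
    exact (HasDerivAt.fun_sum fun i _ => term_deriv (hA i) (ha i) hx).sub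
      (HasDerivAt.fun_sum fun i _ => term_deriv (hB i) (hb i) hx)
  have hψc : ∀ y > 0, ContinuousAt ψ y := fun y hy => by
    rw [hψ]; exact (psi_deriv hy).continuousAt
  have hterm0 : ∀ A a : ℝ, 0 < a → ContinuousAt (fun x => A * ψ (A * x + a)) 0 := by
    intro A a ha
    have h1 : ContinuousAt ψ (A * 0 + a) := hψc _ (by simpa using ha)
    have h2 : ContinuousAt (fun x => ψ (A * x + a)) 0 :=
      ContinuousAt.comp (f := fun x : ℝ => A * x + a) (g := ψ) h1 (by fun_prop)
    exact h2.const_mul A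
  have hf0 : ContinuousAt f 0 :=
    (tendsto_finsetSum _ fun i _ => hterm0 (A i) (a i) (ha i)).sub
      (tendsto_finsetSum _ fun i _ => hterm0 (B i) (b i) (hb i))
  have hf0v : f 0 = (∑ i, A i * ψ (a i)) - ∑ j, B j * ψ (b j) := by simp [hf]
  have hcm := hga.cm_iff (F := deriv f) fun x hx => (hfd x hx).deriv
  rw [BernsteinOn, hcm, ← hf0v]
  constructor
  · rintro ⟨h1, h2⟩
    refine ⟨fun u hu => ?_, ?_⟩
    · have := hga.nonneg_of h2 u hu
      rw [hgP] at this
      exact nonneg_of_mul_nonneg_right this hu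
    · have h3 : Filter.Tendsto f (nhdsWithin 0 (Set.Ioi 0)) (nhds (f 0)) :=
        hf0.tendsto.mono_left nhdsWithin_le_nhds
      exact ge_of_tendsto h3 (Filter.eventually_of_mem self_mem_nhdsWithin fun x hx => h1 x hx)
  · rintro ⟨h1, h2⟩
    have hpos : ∀ n : ℕ, ∀ x > 0, 0 ≤ lapT g n x := by
      intro n x hx
      apply setIntegral_nonneg measurableSet_Ioi
      intro s hs
      have hs' : 0 < s := hs
      rw [hgP]
      have := h1 s hs
      positivity
    refine ⟨fun x hx => ?_, hpos⟩
    have hmono : MonotoneOn f (Set.Ici 0) := by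
      apply monotoneOn_of_deriv_nonneg (convex_Ici 0)
      · intro y hy
        rcases eq_or_lt_of_le (show (0:ℝ) ≤ y from hy) with h | h
        · rw [← h]; exact hf0.continuousWithinAt
        · exact (hfd y h).continuousAt.continuousWithinAt
      · intro y hy
        rw [interior_Ici] at hy
        exact (hfd y hy).differentiableAt.differentiableWithinAt
      · intro y hy
        rw [interior_Ici] at hy
        rw [(hfd y hy).deriv]
        exact hpos 0 y hy
    exact h2.trans (hmono (by simp) (show (0:ℝ) ≤ x from hx.le) hx.le)
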